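/- For every δ with 0 ≤ δ < 1, D(1/3 + 2δ/3 ‖ 1/3) ≥ γ·δ², where γ := 4·ln(2)/3 (so γ ≈ 0.924 improves the constant 8/9). -/

import Mathlib

open Real

/-- Kullback–Leibler divergence `D(q‖p) = q·ln(q/p) + (1−q)·ln((1−q)/(1−p))`
(equal to `0` when `q = p`). -/
noncomputable def klDiv (q p : ℝ) : ℝ :=
  q * Real.log (q / p) + (1 - q) * Real.log ((1 - q) / (1 - p))

/-! The binary entropy `H q` is a concave function of `q (1 - q) = (1 - (1 - 2 q) ^ 2) / 4`, because
`log 2 - H q` is a power series in `(1 - 2 q) ^ 2` with nonnegative coefficients. Since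
`D(q‖p) = H p - H q + (q - p) H'(p)`, the tangent inequality at `p` for this concave function is
`D(q‖p) ≥ H'(p) / (1 - 2 p) * (q - p) ^ 2`, where `H'(p) = log ((1 - p) / p)`. For `p = 1 / 3` the
constant is `3 log 2`. -/

variable {p q : ℝ}

lemma abs_one_sub_two_mul_lt_one (hp₀ : 0 < p) (hp₁ : p < 1) : |1 - 2 * p| < 1 :=
  abs_lt.mpr ⟨by linarith, by linarith⟩

lemma hasSum_log_one_sub_div (hp₀ : 0 < p) (hp₁ : p < 1) :
    HasSum (fun k : ℕ => 2 * (1 / (2 * k + 1)) * (1 - 2 * p) ^ (2 * k + 1))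
      (log ((1 - p) / p)) := by
  have hlog : log (1 + (1 - 2 * p)) - log (1 - (1 - 2 * p)) = log ((1 - p) / p) := by
    rw [← log_div (by linarith) (by linarith)]
    congr 1
    field_simp
    ring
  exact hlog ▸ hasSum_log_sub_log_of_abs_lt_one (abs_one_sub_two_mul_lt_one hp₀ hp₁)

lemma hasSum_log_two_sub_binEntropy (hp₀ : 0 < p) (hp₁ : p < 1) :
    HasSum (fun k : ℕ => ((1 - 2 * p) ^ 2) ^ (k + 1) / ((2 * k + 1) * (2 * k + 2)))
      (log 2 - binEntropy p) := by
  have hsq : |(1 - 2 * p) ^ 2| < 1 := by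
    rw [abs_pow]
    exact pow_lt_one₀ (abs_nonneg _) (abs_one_sub_two_mul_lt_one hp₀ hp₁) two_ne_zero
  have hdiff := (((hasSum_log_one_sub_div hp₀ hp₁).mul_left (1 - 2 * p)).sub
    (hasSum_pow_div_log_of_abs_lt_one hsq)).div_const 2
  convert! hdiff using 1
  · funext k
    generalize 1 - 2 * p = x
    field_simp
    ring
  · have hfactor : 1 - (1 - 2 * p) ^ 2 = 2 ^ 2 * (p * (1 - p)) := by ring
    have hp₁' : 1 - p ≠ 0 := by linarith
    rw [hfactor, log_mul (by norm_num) (by positivity), log_pow, log_mul hp₀.ne' hp₁',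
      log_div hp₁' hp₀.ne', binEntropy, log_inv, log_inv]
    push_cast
    ring

/-- The second summand is `y ^ 2 - x ^ 2` times the derivative of the first one with respect to
`x ^ 2`, written so that it matches the series of `log ((1 - p) / p)` at `x = 1 - 2 * p`. -/
lemma sq_pow_succ_div_tangent_le {x : ℝ} (hx : x ≠ 0) (y : ℝ) (k : ℕ) :
    (x ^ 2) ^ (k + 1) / ((2 * k + 1) * (2 * k + 2)) +
        (y ^ 2 - x ^ 2) / (4 * x) * (2 * (1 / (2 * k + 1)) * x ^ (2 * k + 1)) ≤
      (y ^ 2) ^ (k + 1) / ((2 * k + 1) * (2 * k + 2)) := by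
  have hbernoulli : (x ^ 2) ^ (k + 1) + (k + 1 : ℕ) * (x ^ 2) ^ k * (y ^ 2 - x ^ 2) ≤
      (y ^ 2) ^ (k + 1) := by
    have h := pow_add_mul_le_add_pow (sq_nonneg x) (b := y ^ 2 - x ^ 2)
      (by linarith [sq_nonneg x, sq_nonneg y]) (k + 1)
    rwa [add_sub_cancel, add_tsub_cancel_right] at h
  calc
    _ = ((x ^ 2) ^ (k + 1) + (k + 1 : ℕ) * (x ^ 2) ^ k * (y ^ 2 - x ^ 2)) /
        ((2 * k + 1) * (2 * k + 2)) := by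
      push_cast
      field_simp
      ring
    _ ≤ _ := by gcongr

lemma binEntropy_le_add_mul_sub_of_mem_Ioo (hp₀ : 0 < p) (hp₁ : p < 1) (hp : p ≠ 1 / 2)
    (hq : q ∈ Set.Ioo 0 1) :
    binEntropy q ≤
      binEntropy p + log ((1 - p) / p) / (1 - 2 * p) * (q * (1 - q) - p * (1 - p)) := by
  have hx : 1 - 2 * p ≠ 0 := fun h => hp (by linarith)
  have htangent := (hasSum_log_two_sub_binEntropy hp₀ hp₁).add
    ((hasSum_log_one_sub_div hp₀ hp₁).mul_left
      (((1 - 2 * q) ^ 2 - (1 - 2 * p) ^ 2) / (4 * (1 - 2 * p))))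
  have hle := hasSum_le (sq_pow_succ_div_tangent_le hx (1 - 2 * q)) htangent
    (hasSum_log_two_sub_binEntropy hq.1 hq.2)
  have hslope :
      ((1 - 2 * q) ^ 2 - (1 - 2 * p) ^ 2) / (4 * (1 - 2 * p)) * log ((1 - p) / p) =
        -(log ((1 - p) / p) / (1 - 2 * p) * (q * (1 - q) - p * (1 - p))) := by
    generalize log ((1 - p) / p) = l
    field_simp
    ring
  linarith

lemma binEntropy_le_add_mul_sub (hp₀ : 0 < p) (hp₁ : p < 1) (hp : p ≠ 1 / 2)
    (hq : q ∈ Set.Icc 0 1) :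
    binEntropy q ≤
      binEntropy p + log ((1 - p) / p) / (1 - 2 * p) * (q * (1 - q) - p * (1 - p)) := by
  rw [← closure_Ioo zero_ne_one] at hq
  exact le_on_closure (fun r hr => binEntropy_le_add_mul_sub_of_mem_Ioo hp₀ hp₁ hp hr)
    (by fun_prop) (by fun_prop) hq

lemma mul_log_div_eq_sub (x : ℝ) {y : ℝ} (hy : y ≠ 0) :
    x * log (x / y) = x * log x - x * log y := by
  rcases eq_or_ne x 0 with rfl | hx
  · simp
  · rw [log_div hx hy, mul_sub]

lemma klDiv_eq_binEntropy_sub_add (hp₀ : p ≠ 0) (hp₁ : p ≠ 1) (q : ℝ) :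
    klDiv q p = binEntropy p - binEntropy q + (q - p) * log ((1 - p) / p) := by
  have hp₁' : 1 - p ≠ 0 := sub_ne_zero.mpr hp₁.symm
  rw [klDiv, mul_log_div_eq_sub q hp₀, mul_log_div_eq_sub (1 - q) hp₁', log_div hp₁' hp₀]
  simp only [binEntropy, log_inv]
  ring

theorem kl_third_ge_sharp_general (hp₀ : 0 < p) (hp₁ : p < 1) (hp : p ≠ 1 / 2)
    (hq : q ∈ Set.Icc 0 1) :
    log ((1 - p) / p) / (1 - 2 * p) * (q - p) ^ 2 ≤ klDiv q p := by
  have hx : 1 - 2 * p ≠ 0 := fun h => hp (by linarith)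
  set c := log ((1 - p) / p) / (1 - 2 * p)
  have hlog : log ((1 - p) / p) = c * (1 - 2 * p) := (div_mul_cancel₀ _ hx).symm
  calc
    c * (q - p) ^ 2 = -(c * (q * (1 - q) - p * (1 - p))) + (q - p) * (c * (1 - 2 * p)) := by ring
    _ ≤ binEntropy p - binEntropy q + (q - p) * log ((1 - p) / p) := by
      rw [hlog]
      linarith [binEntropy_le_add_mul_sub hp₀ hp₁ hp hq]
    _ = klDiv q p := (klDiv_eq_binEntropy_sub_add hp₀.ne' hp₁.ne q).symm

/-- For every `0 ≤ δ < 1`, `D(1/3 + 2δ/3 ‖ 1/3) ≥ γ·δ²` with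
`γ := 4·ln(2)/3 ≈ 0.924`, improving the constant `8/9`. -/
theorem kl_third_ge_sharp (δ : ℝ) (hδ0 : 0 ≤ δ) (hδ1 : δ < 1) :
    (4 * Real.log 2 / 3) * δ ^ 2 ≤ klDiv (1 / 3 + 2 * δ / 3) (1 / 3) := by
  have hq : 1 / 3 + 2 * δ / 3 ∈ Set.Icc (0 : ℝ) 1 := ⟨by linarith, by linarith⟩
  convert! kl_third_ge_sharp_general (p := 1 / 3) (by norm_num) (by norm_num) (by norm_num) hq
    using 1
  norm_num
  ring
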